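/- In the minimalistic affine super Yangian Y_ℏ(ŝl(m|n,Π)) with recursively defined higher generators, the odd Serre relation holds in all degrees: for every odd simple root α_j and all r, s ∈ ℤ_{≥0}, [[x^±_{α_{j−1},r}, x^±_{α_j,0}], [x^±_{α_j,0}, x^±_{α_{j+1},s}]] = 0. -/

import Mathlib

/-!
Since the elements `h̃_{α_i,1}` commute with each other, the recursion defining the higher
generators gives `[h̃_{α_i,1}, x^±_{α_k,r}] = ± a_{ik} x^±_{α_k,r+1}` for all `i`, `k` and `r ≥ 0`
(`ht_xpn`, `ht_xmn`).  As `m, n ≥ 2` and `m ≠ n`, the Dynkin diagram is a cycle with at least five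
nodes.  Hence `j − 2` is adjacent to `j − 1` but not to `j` or `j + 1`, so `ad h̃_{α_{j−2},1}` raises
`r` in the odd Serre expression, up to a nonzero scalar, and leaves the other degrees fixed;
symmetrically `ad h̃_{α_{j+2},1}` raises `s`.  Applying these derivations repeatedly to the defining
relation `r = s = 0` gives the relation in all degrees.
-/

/-!
Common framework for formalizing statements about affine super Yangians
`Y_ℏ(ŝl(m|n,Π))` attached to a simple root system `Π` of the affine
Kac–Moody superalgebra `ŝl(m|n)` of type `A^{(1)}(m−1|n−1)`.
-/

noncomputable section

namespace ASY

open scoped TensorProduct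

/-- The ground ring `ℂ[ℏ]`. -/
abbrev R : Type := Polynomial ℂ

/-- The formal deformation parameter `ℏ`. -/
def hbar : R := Polynomial.X

/-- `1/2` as an element of `ℂ[ℏ]`. -/
def half : R := Polynomial.C (1/2 : ℂ)

/-- The sign `(−1)^{p(a)p(b)}` attached to parities `pa`, `pb`. -/
def sg (pa pb : Bool) : R := if pa && pb then -1 else 1

section SuperOps

variable {Y : Type*} [Ring Y] [Algebra R Y]

/-- The supercommutator `[a,b] = ab − (−1)^{p(a)p(b)} ba` of homogeneous elements of
parities `pa` and `pb`. -/
def sbr (pa pb : Bool) (x y : Y) : Y := x * y - sg pa pb • (y * x)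

/-- The super anticommutator `{a,b} = ab + (−1)^{p(a)p(b)} ba`. -/
def sac (pa pb : Bool) (x y : Y) : Y := x * y + sg pa pb • (y * x)

/-- Iterated super-adjoint action `(ad x)^k y` for `x` of parity `pa` and `y` of parity `pb`. -/
def adN (pa pb : Bool) (x : Y) : ℕ → Y → Y
  | 0, y => y
  | k + 1, y => sbr pa (xor pb (pa && decide (k % 2 = 1))) x (adN pa pb x k y)

/-- Iterated super-bracket `[x₁,[x₂,…,[x_k, y]…]]`, all `xᵢ` of parity `pa`, `y` of parity `pb`. -/
def adSeq (pa pb : Bool) : List Y → Y → Y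
  | [], y => y
  | x :: l, y => sbr pa (xor pb (pa && decide (l.length % 2 = 1))) x (adSeq pa pb l y)

end SuperOps

/-- A simple root system `Π` of the affine Kac–Moody superalgebra `ŝl(m|n)`
(type `A^{(1)}(m−1|n−1)`): a cyclic arrangement of the `m + n` weights
`ε₁,…,ε_m, δ₁,…,δ_n`, recorded by the type of the weight at each position
(`false` = an `ε`-weight of norm `+1`, `true` = a `δ`-weight of norm `−1`);
the simple roots are `α_i = e_i − e_{i+1}` (indices mod `m+n`). -/
structure SimpleRootSystem (m n : ℕ) : Type where
  /-- the type of the weight at each position -/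
  τ : Fin (m + n) → Bool
  /-- there are exactly `n` weights of `δ`-type -/
  card_delta : (Finset.univ.filter fun k => τ k = true).card = n

namespace SimpleRootSystem

variable {m n : ℕ}

/-- The norm `(e_k, e_k) = ±1` of the `k`-th weight. -/
def w (P : SimpleRootSystem m n) (k : Fin (m + n)) : ℤ := if P.τ k then -1 else 1

variable [NeZero (m + n)]

/-- The coefficient of `e_k` in the simple root `α_i = e_i − e_{i+1}`. -/
def coeffα (i k : Fin (m + n)) : ℤ := (if k = i then 1 else 0) - (if k = i + 1 then 1 else 0)

/-- The (symmetric) Cartan matrix `a_{ij} = (α_i, α_j)` of `Π`. -/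
def a (P : SimpleRootSystem m n) (i j : Fin (m + n)) : ℤ :=
  ∑ k, P.w k * coeffα i k * coeffα j k

/-- The parity of the simple root `α_i` (`true` iff `α_i` is odd, iff `a_{ii} = 0`). -/
def par (P : SimpleRootSystem m n) (i : Fin (m + n)) : Bool := P.τ i != P.τ (i + 1)

/-- The reflection `s_{α_i}` on simple root systems: on the weight arrangement it
swaps the weights at positions `i` and `i+1`.  For `α_i` even it preserves `Π`;
for `α_i` odd it is the odd reflection `Π ↦ Π₁`. -/
def reflect (P : SimpleRootSystem m n) (i : Fin (m + n)) : SimpleRootSystem m n where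
  τ := P.τ ∘ Equiv.swap i (i + 1)
  card_delta := by
    have h1 : (Finset.univ.filter fun k => (P.τ ∘ Equiv.swap i (i + 1)) k = true).card
        = (Finset.univ.filter fun k => P.τ k = true).card :=
      Finset.card_equiv (Equiv.swap i (i + 1)) (fun k => by simp)
    rw [h1, P.card_delta]

/-- Applying a word of simple reflections to a simple root system. -/
def applyWord (P : SimpleRootSystem m n) : List (Fin (m + n)) → SimpleRootSystem m n
  | [] => P
  | c :: l => applyWord (P.reflect c) l

/-- The word consists of even reflections at every stage (i.e. it represents an
element of the Weyl group, generated by even reflections). -/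
def IsEvenWord (P : SimpleRootSystem m n) : List (Fin (m + n)) → Prop
  | [] => True
  | c :: l => P.par c = false ∧ IsEvenWord (P.reflect c) l

end SimpleRootSystem

end ASY

namespace ASY

/-- Generators of the minimalistic affine super Yangian: `x^±_{α_i,r}`, `h_{α_i,r}`
with `i ∈ I` and `r ∈ {0,1}`. -/
inductive MGen (N : ℕ) : Type
  | xp (i : Fin N) (r : Fin 2)
  | xm (i : Fin N) (r : Fin 2)
  | h (i : Fin N) (r : Fin 2)

/-- The free algebra on the minimalistic generators. -/
abbrev MFree (m n : ℕ) : Type := FreeAlgebra R (MGen (m + n))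

section MinDefs

variable {m n : ℕ}

/-- `x^+_{α_i,r}` in the free algebra. -/
def MXp (i : Fin (m + n)) (r : Fin 2) : MFree m n := FreeAlgebra.ι R (MGen.xp i r)

/-- `x^−_{α_i,r}` in the free algebra. -/
def MXm (i : Fin (m + n)) (r : Fin 2) : MFree m n := FreeAlgebra.ι R (MGen.xm i r)

/-- `h_{α_i,r}` in the free algebra. -/
def MH (i : Fin (m + n)) (r : Fin 2) : MFree m n := FreeAlgebra.ι R (MGen.h i r)

/-- `h̃_{α_i,1} = h_{α_i,1} − (ℏ/2) h_{α_i,0}²` in the free algebra. -/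
def MHt (i : Fin (m + n)) : MFree m n := MH i 1 - (half * hbar) • (MH i 0 * MH i 0)

variable [NeZero (m + n)]

/-- The defining relations of the minimalistic affine super Yangian `Y_ℏ(ŝl(m|n,Π))`. -/
inductive MRel (P : SimpleRootSystem m n) : MFree m n → MFree m n → Prop
  /-- `[h_{α_i,r}, h_{α_j,s}] = 0` -/
  | hh (i j : Fin (m + n)) (r s : Fin 2) :
      MRel P (sbr false false (MH i r) (MH j s)) 0
  /-- `[x^+_{α_i,0}, x^−_{α_j,0}] = δ_{ij} h_{α_i,0}` -/
  | pm00 (i j : Fin (m + n)) :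
      MRel P (sbr (P.par i) (P.par j) (MXp i 0) (MXm j 0)) (if i = j then MH i 0 else 0)
  /-- `[x^+_{α_i,1}, x^−_{α_j,0}] = δ_{ij} h_{α_i,1}` -/
  | pm10 (i j : Fin (m + n)) :
      MRel P (sbr (P.par i) (P.par j) (MXp i 1) (MXm j 0)) (if i = j then MH i 1 else 0)
  /-- `[x^+_{α_i,0}, x^−_{α_j,1}] = δ_{ij} h_{α_i,1}` -/
  | pm01 (i j : Fin (m + n)) :
      MRel P (sbr (P.par i) (P.par j) (MXp i 0) (MXm j 1)) (if i = j then MH i 1 else 0)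
  /-- `[h_{α_i,0}, x^+_{α_j,r}] = a_{ij} x^+_{α_j,r}` -/
  | hxp (i j : Fin (m + n)) (r : Fin 2) :
      MRel P (sbr false (P.par j) (MH i 0) (MXp j r)) (((P.a i j : ℤ) : R) • MXp j r)
  /-- `[h_{α_i,0}, x^−_{α_j,r}] = −a_{ij} x^−_{α_j,r}` -/
  | hxm (i j : Fin (m + n)) (r : Fin 2) :
      MRel P (sbr false (P.par j) (MH i 0) (MXm j r)) ((-(P.a i j : ℤ) : R) • MXm j r)
  /-- `[x^+_{α_i,1},x^+_{α_j,0}] − [x^+_{α_i,0},x^+_{α_j,1}] = (ℏ a_{ij}/2){x^+_{α_i,0},x^+_{α_j,0}}` -/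
  | mixp (i j : Fin (m + n)) :
      MRel P (sbr (P.par i) (P.par j) (MXp i 1) (MXp j 0)
          - sbr (P.par i) (P.par j) (MXp i 0) (MXp j 1))
        ((half * hbar * ((P.a i j : ℤ) : R)) • sac (P.par i) (P.par j) (MXp i 0) (MXp j 0))
  /-- `[x^−_{α_i,1},x^−_{α_j,0}] − [x^−_{α_i,0},x^−_{α_j,1}] = −(ℏ a_{ij}/2){x^−_{α_i,0},x^−_{α_j,0}}` -/
  | mixm (i j : Fin (m + n)) :
      MRel P (sbr (P.par i) (P.par j) (MXm i 1) (MXm j 0)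
          - sbr (P.par i) (P.par j) (MXm i 0) (MXm j 1))
        ((-(half * hbar * ((P.a i j : ℤ) : R))) • sac (P.par i) (P.par j) (MXm i 0) (MXm j 0))
  /-- `[h̃_{α_i,1}, x^+_{α_j,0}] = a_{ij} x^+_{α_j,1}` -/
  | htxp (i j : Fin (m + n)) :
      MRel P (sbr false (P.par j) (MHt i) (MXp j 0)) (((P.a i j : ℤ) : R) • MXp j 1)
  /-- `[h̃_{α_i,1}, x^−_{α_j,0}] = −a_{ij} x^−_{α_j,1}` -/
  | htxm (i j : Fin (m + n)) :
      MRel P (sbr false (P.par j) (MHt i) (MXm j 0)) ((-(P.a i j : ℤ) : R) • MXm j 1)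
  /-- Serre relation `(ad x^+_{α_i,0})^{1+|a_{ij}|}(x^+_{α_j,0}) = 0`, `i ≠ j` -/
  | serrep (i j : Fin (m + n)) (hij : i ≠ j) :
      MRel P (adN (P.par i) (P.par j) (MXp i 0) (1 + (P.a i j).natAbs) (MXp j 0)) 0
  /-- Serre relation `(ad x^−_{α_i,0})^{1+|a_{ij}|}(x^−_{α_j,0}) = 0`, `i ≠ j` -/
  | serrem (i j : Fin (m + n)) (hij : i ≠ j) :
      MRel P (adN (P.par i) (P.par j) (MXm i 0) (1 + (P.a i j).natAbs) (MXm j 0)) 0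
  /-- `[x^+_{α_t,0}, x^+_{α_t,0}] = 0` for `α_t` odd -/
  | oddp (t : Fin (m + n)) (ht : P.par t = true) :
      MRel P (sbr true true (MXp t 0) (MXp t 0)) 0
  /-- `[x^−_{α_t,0}, x^−_{α_t,0}] = 0` for `α_t` odd -/
  | oddm (t : Fin (m + n)) (ht : P.par t = true) :
      MRel P (sbr true true (MXm t 0) (MXm t 0)) 0
  /-- `[[x^+_{α_{t−1},0},x^+_{α_t,0}],[x^+_{α_t,0},x^+_{α_{t+1},0}]] = 0` for `α_t` odd -/
  | oddSp (t : Fin (m + n)) (ht : P.par t = true) :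
      MRel P (sbr (xor (P.par (t - 1)) true) (xor true (P.par (t + 1)))
        (sbr (P.par (t - 1)) true (MXp (t - 1) 0) (MXp t 0))
        (sbr true (P.par (t + 1)) (MXp t 0) (MXp (t + 1) 0))) 0
  /-- `[[x^−_{α_{t−1},0},x^−_{α_t,0}],[x^−_{α_t,0},x^−_{α_{t+1},0}]] = 0` for `α_t` odd -/
  | oddSm (t : Fin (m + n)) (ht : P.par t = true) :
      MRel P (sbr (xor (P.par (t - 1)) true) (xor true (P.par (t + 1)))
        (sbr (P.par (t - 1)) true (MXm (t - 1) 0) (MXm t 0))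
        (sbr true (P.par (t + 1)) (MXm t 0) (MXm (t + 1) 0))) 0

/-- The minimalistic affine super Yangian `Y_ℏ(ŝl(m|n,Π))`, presented on the
generators `x^±_{α_i,r}`, `h_{α_i,r}` (`r ∈ {0,1}`) by the minimalistic relations. -/
abbrev Ymin (P : SimpleRootSystem m n) : Type := RingQuot (MRel P)

/-- The canonical projection from the free algebra onto `Y_ℏ(ŝl(m|n,Π))`. -/
def mkY (P : SimpleRootSystem m n) : MFree m n →ₐ[R] Ymin P := RingQuot.mkAlgHom R (MRel P)

/-- The generator `x^+_{α_i,r}` of `Y_ℏ(ŝl(m|n,Π))`. -/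
def xgp (P : SimpleRootSystem m n) (i : Fin (m + n)) (r : Fin 2) : Ymin P := mkY P (MXp i r)

/-- The generator `x^−_{α_i,r}` of `Y_ℏ(ŝl(m|n,Π))`. -/
def xgm (P : SimpleRootSystem m n) (i : Fin (m + n)) (r : Fin 2) : Ymin P := mkY P (MXm i r)

/-- The generator `h_{α_i,r}` of `Y_ℏ(ŝl(m|n,Π))`. -/
def hg (P : SimpleRootSystem m n) (i : Fin (m + n)) (r : Fin 2) : Ymin P := mkY P (MH i r)

/-- The element `h̃_{α_i,1} = h_{α_i,1} − (ℏ/2)h_{α_i,0}²` of `Y_ℏ(ŝl(m|n,Π))`. -/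
def htilY (P : SimpleRootSystem m n) (i : Fin (m + n)) : Ymin P := mkY P (MHt i)

/-- The scalar `a_{i+1,i}⁻¹ ∈ ℂ ⊆ ℂ[ℏ]`. -/
def acoef (P : SimpleRootSystem m n) (i : Fin (m + n)) : R :=
  Polynomial.C (((P.a (i + 1) i : ℤ) : ℂ)⁻¹)

/-- The recursively defined higher generators
`x^+_{α_i,r+1} := a_{i+1,i}⁻¹ [h̃_{α_{i+1},1}, x^+_{α_i,r}]` (`r ≥ 1`). -/
def xpn (P : SimpleRootSystem m n) (i : Fin (m + n)) : ℕ → Ymin P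
  | 0 => xgp P i 0
  | 1 => xgp P i 1
  | r + 2 => acoef P i • sbr false (P.par i) (htilY P (i + 1)) (xpn P i (r + 1))

/-- The recursively defined higher generators
`x^−_{α_i,r+1} := −a_{i+1,i}⁻¹ [h̃_{α_{i+1},1}, x^−_{α_i,r}]` (`r ≥ 1`). -/
def xmn (P : SimpleRootSystem m n) (i : Fin (m + n)) : ℕ → Ymin P
  | 0 => xgm P i 0
  | 1 => xgm P i 1
  | r + 2 => (-acoef P i) • sbr false (P.par i) (htilY P (i + 1)) (xmn P i (r + 1))

/-- The recursively defined higher Cartan generators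
`h_{α_i,r+1} := [x^+_{α_i,r+1}, x^−_{α_i,0}]` (`r ≥ 1`). -/
def hcn (P : SimpleRootSystem m n) (i : Fin (m + n)) : ℕ → Ymin P
  | 0 => hg P i 0
  | 1 => hg P i 1
  | r + 2 => sbr (P.par i) (P.par i) (xpn P i (r + 2)) (xmn P i 0)

end MinDefs

end ASY

namespace ASY

section Derivation

variable {Y : Type*} [Ring Y] [Algebra R Y]

/-- The bracket with an even element does not depend on the recorded parity of the other one. -/
lemma sbr_false (p : Bool) (x y : Y) : sbr false p x y = x * y - y * x := by
  simp [sbr, sg]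

/-- Bracketing with an even element is a derivation of the superbracket. -/
lemma comm_sbr (p q : Bool) (h x y : Y) :
    h * sbr p q x y - sbr p q x y * h
      = sbr p q (h * x - x * h) y + sbr p q x (h * y - y * h) := by
  simp only [sbr, mul_sub, sub_mul, mul_smul_comm, smul_mul_assoc, smul_sub, mul_assoc]
  abel

lemma sbr_smul_left (p q : Bool) (c : R) (x y : Y) :
    sbr p q (c • x) y = c • sbr p q x y := by
  simp only [sbr, mul_smul_comm, smul_mul_assoc, smul_sub]
  rw [smul_comm]

lemma sbr_smul_right (p q : Bool) (c : R) (x y : Y) :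
    sbr p q x (c • y) = c • sbr p q x y := by
  simp only [sbr, mul_smul_comm, smul_mul_assoc, smul_sub]
  rw [smul_comm]

lemma sbr_zero_left (p q : Bool) (y : Y) : sbr p q 0 y = 0 := by simp [sbr]

lemma sbr_zero_right (p q : Bool) (x : Y) : sbr p q x 0 = 0 := by simp [sbr]

/-- A derivation `ad h` that kills `z` and `w` and sends `x` to a unit multiple of `x'`
transports the odd Serre relation from `x` to `x'`. -/
lemma step_left (p q p₁ q₁ p₂ q₂ : Bool) {h x x' z w : Y} {c c' : R} (hc : c' * c = 1)
    (hx : h * x - x * h = c • x') (hz : h * z - z * h = 0) (hw : h * w - w * h = 0)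
    (H : sbr p q (sbr p₁ q₁ x z) (sbr p₂ q₂ z w) = 0) :
    sbr p q (sbr p₁ q₁ x' z) (sbr p₂ q₂ z w) = 0 := by
  have h1 := comm_sbr p q h (sbr p₁ q₁ x z) (sbr p₂ q₂ z w)
  rw [H, comm_sbr, comm_sbr, hx, hz, hw] at h1
  simp only [sbr_zero_left, sbr_zero_right, sbr_smul_left, mul_zero, zero_mul, sub_zero,
    add_zero] at h1
  rw [← one_smul R (sbr p q (sbr p₁ q₁ x' z) (sbr p₂ q₂ z w)), ← hc, mul_smul, ← h1, smul_zero]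

/-- A derivation `ad h` that kills `x` and `z` and sends `w` to a unit multiple of `w'`
transports the odd Serre relation from `w` to `w'`. -/
lemma step_right (p q p₁ q₁ p₂ q₂ : Bool) {h x z w w' : Y} {c c' : R} (hc : c' * c = 1)
    (hx : h * x - x * h = 0) (hz : h * z - z * h = 0) (hw : h * w - w * h = c • w')
    (H : sbr p q (sbr p₁ q₁ x z) (sbr p₂ q₂ z w) = 0) :
    sbr p q (sbr p₁ q₁ x z) (sbr p₂ q₂ z w') = 0 := by
  have h1 := comm_sbr p q h (sbr p₁ q₁ x z) (sbr p₂ q₂ z w)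
  rw [H, comm_sbr, comm_sbr, hx, hz, hw] at h1
  simp only [sbr_zero_left, sbr_zero_right, sbr_smul_right, mul_zero, zero_mul, sub_zero,
    zero_add, add_zero] at h1
  rw [← one_smul R (sbr p q (sbr p₁ q₁ x z) (sbr p₂ q₂ z w')), ← hc, mul_smul, ← h1, smul_zero]

/-- If `h` and `k` commute, `ad k` carries `x` to `b • x'` and `x'` to `b • x''` with `b` a unit,
and `[h, x] = a x'`, then `[h, x'] = a x''`. -/
lemma ad_shift {h k x x' x'' : Y} {a b b' : R} (hb : b' * b = 1) (hk : h * k = k * h)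
    (h1 : k * x - x * k = b • x') (h2 : k * x' - x' * k = b • x'')
    (h3 : h * x - x * h = a • x') : h * x' - x' * h = a • x'' := by
  have e : b • (h * x' - x' * h) = b • (a • x'') := by
    calc b • (h * x' - x' * h) = h * (b • x') - (b • x') * h := by
          rw [smul_sub, mul_smul_comm, smul_mul_assoc]
      _ = k * (h * x - x * h) - (h * x - x * h) * k := by
          rw [← h1]
          simp only [mul_sub, sub_mul, ← mul_assoc, hk]
          simp only [mul_assoc, hk]
          abel
      _ = b • (a • x'') := by
          rw [h3, mul_smul_comm, smul_mul_assoc, ← smul_sub, h2, smul_comm]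
  have := congrArg (fun y => b' • y) e
  simpa only [← mul_smul, ← mul_assoc, hb, one_mul, one_smul] using this

lemma mul_comm_tilde {x a b : Y} (c : R) (ha : x * a = a * x) (hb : x * b = b * x) :
    x * (a - c • (b * b)) = (a - c • (b * b)) * x := by
  rw [mul_sub, sub_mul, ha, mul_smul_comm, smul_mul_assoc, ← mul_assoc, hb, mul_assoc, hb,
    mul_assoc]

end Derivation

lemma w_cases {m n : ℕ} (P : SimpleRootSystem m n) (i : Fin (m + n)) : P.w i = 1 ∨ P.w i = -1 := by
  unfold SimpleRootSystem.w; split_ifs <;> simp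

section Cartan

variable {m n : ℕ} [NeZero (m + n)]

open SimpleRootSystem

lemma a_eq (P : SimpleRootSystem m n) (i j : Fin (m + n)) :
    P.a i j = P.w i * coeffα j i - P.w (i + 1) * coeffα j (i + 1) := by
  have : ∀ k, P.w k * coeffα i k * coeffα j k
      = (if k = i then P.w k * coeffα j k else 0)
        - (if k = i + 1 then P.w k * coeffα j k else 0) := by
    intro k
    rw [coeffα]
    split_ifs <;> ring
  simp [a, this, Finset.sum_sub_distrib]

lemma a_eq_zero (P : SimpleRootSystem m n) {i j : Fin (m + n)} (h0 : i ≠ j)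
    (h1 : i ≠ j + 1) (h2 : i + 1 ≠ j) : P.a i j = 0 := by
  simp [a_eq, coeffα, h0, h1, h2]

open scoped Fin.CommRing

lemma natCast_fin_ne (hN : 5 ≤ m + n) (k : ℕ) (hk : 0 < k) (hk' : k < 5) :
    ((k : ℕ) : Fin (m + n)) ≠ 0 := by
  rw [Ne, Fin.natCast_eq_zero]
  intro h
  have := Nat.le_of_dvd hk h
  omega

/-- Distinctness of nearby nodes of a cycle with at least five nodes. -/
lemma cycle_ne (hN : 5 ≤ m + n) (i : Fin (m + n)) :
    i + 1 ≠ i ∧ i + 1 + 1 ≠ i ∧ i + 1 + 1 + 1 ≠ i ∧ i + 1 + 1 + 1 + 1 ≠ i := by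
  have h1 := natCast_fin_ne hN 1 (by norm_num) (by norm_num)
  have h2 := natCast_fin_ne hN 2 (by norm_num) (by norm_num)
  have h3 := natCast_fin_ne hN 3 (by norm_num) (by norm_num)
  have h4 := natCast_fin_ne hN 4 (by norm_num) (by norm_num)
  push_cast at h1 h2 h3 h4
  refine ⟨fun h => h1 ?_, fun h => h2 ?_, fun h => h3 ?_, fun h => h4 ?_⟩ <;>
    linear_combination h

lemma sub_add_one (i : Fin (m + n)) : i - 1 + 1 = i := by ring

lemma a_succ_left (hN : 5 ≤ m + n) (P : SimpleRootSystem m n) (i : Fin (m + n)) :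
    P.a (i + 1) i = - P.w (i + 1) := by
  obtain ⟨h1, h2, -, -⟩ := cycle_ne hN i
  obtain ⟨h3, -, -, -⟩ := cycle_ne hN (i + 1)
  simp [a_eq, coeffα, h1, h2, h3]

lemma a_succ_right (hN : 5 ≤ m + n) (P : SimpleRootSystem m n) (i : Fin (m + n)) :
    P.a i (i + 1) = - P.w (i + 1) := by
  obtain ⟨h1, h2, -, -⟩ := cycle_ne hN i
  obtain ⟨h3, -, -, -⟩ := cycle_ne hN (i + 1)
  simp [a_eq, coeffα, h1.symm, h2.symm, h3.symm]

lemma a_succ_left_sq (hN : 5 ≤ m + n) (P : SimpleRootSystem m n) (i : Fin (m + n)) :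
    ((P.a (i + 1) i : ℤ) : R) * ((P.a (i + 1) i : ℤ) : R) = 1 := by
  rw [a_succ_left hN]
  rcases w_cases P (i + 1) with h | h <;> simp [h]

lemma a_succ_right_sq (hN : 5 ≤ m + n) (P : SimpleRootSystem m n) (i : Fin (m + n)) :
    ((P.a i (i + 1) : ℤ) : R) * ((P.a i (i + 1) : ℤ) : R) = 1 := by
  rw [a_succ_right hN]
  rcases w_cases P (i + 1) with h | h <;> simp [h]

lemma a_mul_acoef (hN : 5 ≤ m + n) (P : SimpleRootSystem m n) (i : Fin (m + n)) :
    ((P.a (i + 1) i : ℤ) : R) * acoef P i = 1 := by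
  rw [acoef, a_succ_left hN]
  rcases w_cases P (i + 1) with h | h <;> simp [h]

end Cartan

section Shift

variable {m n : ℕ} [NeZero (m + n)] (P : SimpleRootSystem m n)

lemma mkY_sbr (p q : Bool) (x y : MFree m n) :
    mkY P (sbr p q x y) = sbr p q (mkY P x) (mkY P y) := by
  simp [sbr]

lemma mkY_rel {x y : MFree m n} (h : MRel P x y) : mkY P x = mkY P y :=
  RingQuot.mkAlgHom_rel R h

lemma hg_comm (i j : Fin (m + n)) (r s : Fin 2) :
    hg P i r * hg P j s = hg P j s * hg P i r := by
  have h := mkY_rel P (MRel.hh i j r s)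
  rw [mkY_sbr, sbr_false, map_zero] at h
  exact sub_eq_zero.mp h

lemma htilY_eq (i : Fin (m + n)) :
    htilY P i = hg P i 1 - (half * hbar) • (hg P i 0 * hg P i 0) := by
  simp [htilY, MHt, hg]

lemma htilY_comm (i j : Fin (m + n)) : htilY P i * htilY P j = htilY P j * htilY P i := by
  have key : ∀ i j r, hg P i r * htilY P j = htilY P j * hg P i r := by
    intro i j r
    rw [htilY_eq]
    exact mul_comm_tilde (Y := Ymin P) _ (hg_comm P _ _ _ _) (hg_comm P _ _ _ _)
  rw [htilY_eq P j]
  exact mul_comm_tilde (Y := Ymin P) _ (key _ _ _).symm (key _ _ _).symm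

/-- `[h̃_{α_i,1}, x^+_{α_k,r}] = a_{ik} x^+_{α_k,r+1}` in every degree. -/
lemma ht_xpn (hN : 5 ≤ m + n) (k : Fin (m + n)) (r : ℕ) (i : Fin (m + n)) :
    htilY P i * xpn P k r - xpn P k r * htilY P i
      = ((P.a i k : ℤ) : R) • xpn P k (r + 1) := by
  induction r generalizing i with
  | zero =>
    have h := mkY_rel P (MRel.htxp i k)
    rw [mkY_sbr, sbr_false, map_smul] at h
    exact h
  | succ r ih =>
    refine ad_shift (Y := Ymin P) (a_succ_left_sq hN P k) (htilY_comm P i (k + 1)) (ih (k + 1)) ?_ (ih i)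
    rw [xpn, sbr_false, ← mul_smul, a_mul_acoef hN, one_smul]

/-- `[h̃_{α_i,1}, x^−_{α_k,r}] = −a_{ik} x^−_{α_k,r+1}` in every degree. -/
lemma ht_xmn (hN : 5 ≤ m + n) (k : Fin (m + n)) (r : ℕ) (i : Fin (m + n)) :
    htilY P i * xmn P k r - xmn P k r * htilY P i
      = (-((P.a i k : ℤ) : R)) • xmn P k (r + 1) := by
  induction r generalizing i with
  | zero =>
    have h := mkY_rel P (MRel.htxm i k)
    rw [mkY_sbr, sbr_false, map_smul] at h
    exact h
  | succ r ih =>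
    refine ad_shift (Y := Ymin P) (b' := -((P.a (k + 1) k : ℤ) : R))
      (by rw [neg_mul_neg, a_succ_left_sq hN P k]) (htilY_comm P i (k + 1)) (ih (k + 1)) ?_ (ih i)
    rw [xmn, sbr_false, ← mul_smul, neg_mul_neg, a_mul_acoef hN, one_smul]

end Shift

/-- In the minimalistic affine super Yangian `Y_ℏ(ŝl(m|n,Π))` with
recursively defined higher generators, the odd Serre relation holds in all degrees: for
every odd simple root `α_j` and all `r, s ∈ ℤ_{≥0}`,
`[[x^±_{α_{j−1},r}, x^±_{α_j,0}], [x^±_{α_j,0}, x^±_{α_{j+1},s}]] = 0`. -/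
theorem odd_serre_all_degrees (m n : ℕ) [NeZero (m + n)]
    (hm : 2 ≤ m) (hn : 2 ≤ n) (hmn : m ≠ n)
    (P : SimpleRootSystem m n) :
    ∀ j : Fin (m + n), P.par j = true → ∀ r s : ℕ,
      sbr (xor (P.par (j - 1)) true) (xor true (P.par (j + 1)))
        (sbr (P.par (j - 1)) true (xpn P (j - 1) r) (xpn P j 0))
        (sbr true (P.par (j + 1)) (xpn P j 0) (xpn P (j + 1) s)) = 0 ∧
      sbr (xor (P.par (j - 1)) true) (xor true (P.par (j + 1)))
        (sbr (P.par (j - 1)) true (xmn P (j - 1) r) (xmn P j 0))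
        (sbr true (P.par (j + 1)) (xmn P j 0) (xmn P (j + 1) s)) = 0 := by
  intro j hj r s
  have hN : 5 ≤ m + n := by omega
  obtain ⟨l, rfl⟩ : ∃ l, j = l + 1 + 1 := ⟨j - 1 - 1, by rw [sub_add_one, sub_add_one]⟩
  have e : l + 1 + 1 - 1 = l + 1 := by
    rw [sub_eq_iff_eq_add]
  simp only [e]
  -- The nodes in play are `l = j − 2`, `l + 1 = j − 1`, `j`, `j + 1` and `j + 2`.
  obtain ⟨l1, l2, l3, l4⟩ := cycle_ne hN l
  obtain ⟨p1, p2, p3, p4⟩ := cycle_ne hN (l + 1)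
  obtain ⟨q1, q2, q3, -⟩ := cycle_ne hN (l + 1 + 1)
  have z1 : P.a l (l + 1 + 1) = 0 := a_eq_zero P l2.symm l3.symm p1.symm
  have z2 : P.a l (l + 1 + 1 + 1) = 0 := a_eq_zero P l3.symm l4.symm p2.symm
  have z3 : P.a (l + 1 + 1 + 1 + 1) (l + 1) = 0 := a_eq_zero P p3 q2 p4
  have z4 : P.a (l + 1 + 1 + 1 + 1) (l + 1 + 1) = 0 :=
    a_eq_zero P q2 (cycle_ne hN (l + 1 + 1 + 1)).1 q3
  constructor
  · induction r with
    | zero =>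
      induction s with
      | zero =>
        have h := mkY_rel P (MRel.oddSp _ hj)
        simp only [mkY_sbr, map_zero, e] at h
        exact h
      | succ s ih =>
        refine step_right (Y := Ymin P) _ _ _ _ _ _ (a_succ_left_sq hN P (l + 1 + 1 + 1)) ?_ ?_
          (ht_xpn P hN _ s _) ih
        · rw [ht_xpn P hN, z3]; simp
        · rw [ht_xpn P hN, z4]; simp
    | succ r ih =>
      refine step_left (Y := Ymin P) _ _ _ _ _ _ (a_succ_right_sq hN P l) (ht_xpn P hN _ r _) ?_ ?_ ih
      · rw [ht_xpn P hN, z1]; simp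
      · rw [ht_xpn P hN, z2]; simp
  · induction r with
    | zero =>
      induction s with
      | zero =>
        have h := mkY_rel P (MRel.oddSm _ hj)
        simp only [mkY_sbr, map_zero, e] at h
        exact h
      | succ s ih =>
        refine step_right (Y := Ymin P) _ _ _ _ _ _ (c' := -((P.a (l + 1 + 1 + 1 + 1) (l + 1 + 1 + 1) : ℤ) : R))
          (by rw [neg_mul_neg, a_succ_left_sq hN]) ?_ ?_ (ht_xmn P hN _ s _) ih
        · rw [ht_xmn P hN, z3]; simp
        · rw [ht_xmn P hN, z4]; simp
    | succ r ih =>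
      refine step_left (Y := Ymin P) _ _ _ _ _ _ (c' := -((P.a l (l + 1) : ℤ) : R))
        (by rw [neg_mul_neg, a_succ_right_sq hN]) (ht_xmn P hN _ r _) ?_ ?_ ih
      · rw [ht_xmn P hN, z1]; simp
      · rw [ht_xmn P hN, z2]; simp

end ASY
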